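/- Let q be a prime and let M2, N2 be integers coprime to q. Then ∑ e((M2·v3·v34* + N2·v14)/q) = −(q−1)·S(M2, N2; q), where the sum runs over all triples (v3, v4, v14) with v3 ∈ ℤ/qℤ, v4 ∈ (ℤ/qℤ)ˣ, v14 ∈ (ℤ/qℤ)ˣ such that v34 := v3·v14 − v4² ≠ 0 in ℤ/qℤ, and v34* denotes the multiplicative inverse of v34 modulo q. -/

import Mathlib

/-- The classical Kloosterman sum `S(a,b;c) = ∑_{x mod c, (x,c)=1} e((a·x + b·x*)/c)`. -/
noncomputable def kloostermanSum (a b : ℤ) (c : ℕ) [NeZero c] : ℂ :=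
  ∑ x : (ZMod c)ˣ,
    Complex.exp (2 * Real.pi * Complex.I *
      ((((a : ZMod c) * (x : ZMod c) + (b : ZMod c) * ((x⁻¹ : (ZMod c)ˣ) : ZMod c)).val : ℂ)
        / (c : ℂ)))

/-!
Summing over `v3` first, the substitution `t = v3 * v14 - v4 ^ 2` turns the phase `v3 / t` into
`v14⁻¹ + (v4 ^ 2 * v14⁻¹) * t⁻¹` with `t` running over the nonzero elements. As `v4` is a unit, the
sum of the nontrivial character over `t⁻¹` is `-1` and leaves only the phase at `v14⁻¹`. So `v4`
contributes nothing but the factor `q - 1`, and the sum over `v14` is a Kloosterman sum after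
`v14 ↦ v14⁻¹`.
-/

/-- The Kloosterman sum of an additive character `ψ` of a commutative ring whose unit group is
finite. For `ψ = e(·/c)` on `ZMod c` it is `kloostermanSum`; it lets the evaluation be carried out
over any finite field. -/
def kloostermanCharSum {A R : Type*} [CommRing A] [Fintype Aˣ] [CommRing R] (ψ : AddChar A R)
    (a b : A) : R :=
  ∑ x : Aˣ, ψ (a * x + b * (x⁻¹ : Aˣ))

theorem exp_val_div_eq_stdAddChar {c : ℕ} [NeZero c] (x : ZMod c) :
    Complex.exp (2 * Real.pi * Complex.I * ((x.val : ℂ) / (c : ℂ))) = ZMod.stdAddChar x := by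
  rw [ZMod.stdAddChar_apply, ZMod.toCircle_apply, mul_div_assoc]

theorem kloostermanSum_eq_kloostermanCharSum (a b : ℤ) (c : ℕ) [NeZero c] :
    kloostermanSum a b c = kloostermanCharSum ZMod.stdAddChar (a : ZMod c) (b : ZMod c) := by
  simp only [kloostermanSum, kloostermanCharSum, exp_val_div_eq_stdAddChar]

theorem kloostermanCharSum_comm {A R : Type*} [CommRing A] [Fintype Aˣ] [CommRing R]
    (ψ : AddChar A R) (a b : A) : kloostermanCharSum ψ a b = kloostermanCharSum ψ b a := by
  unfold kloostermanCharSum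
  rw [← Equiv.sum_comp (Equiv.inv Aˣ)]
  simp only [Equiv.inv_apply, inv_inv, add_comm]

theorem stdAddChar_ne_one (n : ℕ) [NeZero n] [Nontrivial (ZMod n)] :
    (ZMod.stdAddChar : AddChar (ZMod n) ℂ) ≠ 1 := by
  simpa only [AddChar.mulShift_one] using ZMod.isPrimitive_stdAddChar n one_ne_zero

theorem intCast_zmod_ne_zero_of_isCoprime {m : ℤ} {n : ℕ} [Nontrivial (ZMod n)]
    (h : IsCoprime m (n : ℤ)) : (m : ZMod n) ≠ 0 :=
  ((ZMod.coe_int_isUnit_iff_isCoprime m n).mpr h.symm).ne_zero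

section FiniteField

variable {F R : Type*} [Field F] [Fintype F] [DecidableEq F] [CommRing R] [IsDomain R]
  {ψ : AddChar F R}

theorem sum_ite_ne_zero_addChar_mul_inv (hψ : ψ ≠ 1) {k : F} (hk : k ≠ 0) :
    ∑ t : F, (if t ≠ 0 then ψ (k * t⁻¹) else 0) = -1 := by
  -- With the convention `0⁻¹ = 0`, inversion permutes all of `F`.
  have sum_all : ∑ t : F, ψ (k * t⁻¹) = 0 := calc
    ∑ t : F, ψ (k * t⁻¹) = ∑ t : F, ψ.mulShift k t :=
      Equiv.sum_comp (Equiv.inv F) fun t => ψ (k * t)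
    _ = 0 := AddChar.sum_eq_zero_of_ne_one (AddChar.IsPrimitive.of_ne_one hψ hk)
  rw [← Finset.sum_filter, Finset.filter_ne', Finset.sum_erase_eq_sub (Finset.mem_univ 0), sum_all,
    inv_zero, mul_zero, AddChar.map_zero_eq_one, zero_sub]

theorem sum_addChar_mul_inv_mul_sub (hψ : ψ ≠ 1) {m a c : F} (hm : m ≠ 0) (ha : a ≠ 0)
    (hc : c ≠ 0) :
    ∑ v : F, (if v * a - c ≠ 0 then ψ (m * v * (v * a - c)⁻¹) else 0) = -ψ (m * a⁻¹) := by
  have partial_fractions (v : F) (ht : v * a - c ≠ 0) :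
      m * v * (v * a - c)⁻¹ = m * a⁻¹ + m * c * a⁻¹ * (v * a - c)⁻¹ := by
    field_simp
    ring
  let affine : F ≃ F := (Equiv.mulRight₀ a ha).trans (Equiv.subRight c)
  calc
    _ = ∑ v : F, ψ (m * a⁻¹) *
          (if affine v ≠ 0 then ψ (m * c * a⁻¹ * (affine v)⁻¹) else 0) := by
      refine Finset.sum_congr rfl fun v _ => ?_
      rw [show affine v = v * a - c from rfl, mul_ite, mul_zero]
      refine if_ctx_congr Iff.rfl (fun ht => ?_) fun _ => rfl
      rw [partial_fractions v ht, AddChar.map_add_eq_mul]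
    _ = ψ (m * a⁻¹) * ∑ t : F, (if t ≠ 0 then ψ (m * c * a⁻¹ * t⁻¹) else 0) := by
      rw [← Finset.mul_sum,
        affine.sum_comp fun t => if t ≠ 0 then ψ (m * c * a⁻¹ * t⁻¹) else 0]
    _ = -ψ (m * a⁻¹) := by
      rw [sum_ite_ne_zero_addChar_mul_inv hψ (mul_ne_zero (mul_ne_zero hm hc) (inv_ne_zero ha)),
        mul_neg_one]

theorem sum_sum_addChar_mul_inv_mul_sub_add (hψ : ψ ≠ 1) {m : F} (hm : m ≠ 0) (n : F) {c : F}
    (hc : c ≠ 0) :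
    ∑ v : F, ∑ a : Fˣ, (if v * (a : F) - c ≠ 0 then
        ψ (m * v * (v * (a : F) - c)⁻¹ + n * (a : F)) else 0) =
      -kloostermanCharSum ψ m n := by
  rw [Finset.sum_comm, kloostermanCharSum_comm, kloostermanCharSum, ← Finset.sum_neg_distrib]
  refine Finset.sum_congr rfl fun a _ => ?_
  simp only [AddChar.map_add_eq_mul, ← ite_zero_mul]
  rw [← Finset.sum_mul, sum_addChar_mul_inv_mul_sub hψ hm a.ne_zero hc, Units.val_inv_eq_inv_val,
    neg_mul, mul_comm]

theorem sp4_kloosterman_w0_partial_sum_eval_general (hψ : ψ ≠ 1) {m : F} (hm : m ≠ 0) (n : F) :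
    ∑ v3 : F, ∑ v4 : Fˣ, ∑ v14 : Fˣ,
      (if v3 * (v14 : F) - (v4 : F) ^ 2 ≠ 0 then
        ψ (m * v3 * (v3 * (v14 : F) - (v4 : F) ^ 2)⁻¹ + n * (v14 : F))
      else 0)
      = -((Fintype.card F : R) - 1) * kloostermanCharSum ψ m n := by
  have sum_v3_v14 (v4 : Fˣ) :=
    sum_sum_addChar_mul_inv_mul_sub_add hψ hm n (pow_ne_zero 2 v4.ne_zero)
  rw [Finset.sum_comm]
  simp only [sum_v3_v14]
  rw [Finset.sum_const, Finset.card_univ, Fintype.card_units, nsmul_eq_mul,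
    Nat.cast_pred Fintype.card_pos, mul_neg, neg_mul]

end FiniteField

/-- For a prime `q` and integers `M2, N2` coprime to `q`, the exponential sum over triples
`(v3, v4, v14)` with `v3 ∈ ℤ/qℤ`, `v4, v14 ∈ (ℤ/qℤ)ˣ` and `v34 := v3·v14 - v4² ≠ 0`
of `e((M2·v3·v34⁻¹ + N2·v14)/q)` equals `-(q-1)·S(M2, N2; q)`. -/
theorem sp4_kloosterman_w0_partial_sum_eval
    (q : ℕ) [Fact q.Prime] (M2 N2 : ℤ)
    (hM2 : IsCoprime M2 (q : ℤ)) (hN2 : IsCoprime N2 (q : ℤ)) :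
    ∑ v3 : ZMod q, ∑ v4 : (ZMod q)ˣ, ∑ v14 : (ZMod q)ˣ,
      (if v3 * (v14 : ZMod q) - (v4 : ZMod q) ^ 2 ≠ 0 then
        Complex.exp (2 * Real.pi * Complex.I *
          ((((M2 : ZMod q) * v3 * (v3 * (v14 : ZMod q) - (v4 : ZMod q) ^ 2)⁻¹
              + (N2 : ZMod q) * (v14 : ZMod q)).val : ℂ) / (q : ℂ)))
      else 0)
      = -((q : ℂ) - 1) * kloostermanSum M2 N2 q := by
  simpa only [exp_val_div_eq_stdAddChar, kloostermanSum_eq_kloostermanCharSum, ZMod.card] using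
    sp4_kloosterman_w0_partial_sum_eval_general (stdAddChar_ne_one q)
      (intCast_zmod_ne_zero_of_isCoprime hM2) (N2 : ZMod q)
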